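/- For a 2-adic integer ω and k ∈ ℕ define f_ω(k) = (ω+k+1 choose 2k+1)₂, g_ω(k) = (ω+k choose 2k)₂, and h_ω(k) = (ω+k choose 2k+1)₂. Then for all ω ∈ ℤ₂ and all k ∈ ℕ: f_{2ω}(2k) = g_ω(k), f_{2ω+1}(2k) = 0, f_{2ω}(2k+1) = 0, f_{2ω+1}(2k+1) = f_ω(k); g_{2ω}(2k) = g_ω(k), g_{2ω+1}(2k) = g_ω(k), g_{2ω}(2k+1) = h_ω(k), g_{2ω+1}(2k+1) = f_ω(k); h_{2ω}(2k) = 0, h_{2ω+1}(2k) = g_ω(k), h_{2ω}(2k+1) = h_ω(k), h_{2ω+1}(2k+1) = 0. -/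

import Mathlib

/-! All twelve relations are instances of one recursion, the product formula with the lowest binary
digit split off: for `b, c ∈ {0, 1}`,
`(2ω + b choose 2k + c)₂ = C(b, c) · (ω choose k)₂` (`binom2_two_mul_add`).
It holds because passing from `ω` to `2ω + b` shifts the digit sequence by one place and puts `b`
in front. On the level of the canonical approximations this says
`(2ω + b) mod 2^(n+1) = 2 (ω mod 2^n) + b` (`appr_two_mul_add`). For each relation it then
suffices to write the upper argument as `2ω' + b` and the lower one as `2k' + c`.
-/

/-- The `j`-th binary digit `d_j(ω)` of a 2-adic integer `ω`: the `j`-th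
binary digit of the canonical approximation of `ω` modulo `2^(j+1)`, so that
`ω ≡ Σ_{i ≤ j} d_i(ω)·2^i (mod 2^{j+1})` for all `j`. -/
noncomputable def padicDigit (ω : ℤ_[2]) (j : ℕ) : ℕ :=
  if (ω.appr (j + 1)).testBit j then 1 else 0

/-- The generalized binomial coefficient `(ω choose k)₂ = Π_{i≥0} C(d_i(ω), k_i)`
for `ω ∈ ℤ₂` and `k ∈ ℕ` with binary digits `k_i`; it equals `1` if `k_i ≤ d_i(ω)`
for all `i`, and `0` otherwise.  (All binary digits of `k` with index `> k`
vanish, so the product may be truncated at `i = k`.) -/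
noncomputable def binom2 (ω : ℤ_[2]) (k : ℕ) : ℕ :=
  ∏ i ∈ Finset.range (k + 1),
    Nat.choose (padicDigit ω i) (if k.testBit i then 1 else 0)

/-- `f_ω(k) = (ω+k+1 choose 2k+1)₂`. -/
noncomputable def fseq (ω : ℤ_[2]) (k : ℕ) : ℕ :=
  binom2 (ω + (k : ℤ_[2]) + 1) (2 * k + 1)

/-- `g_ω(k) = (ω+k choose 2k)₂`. -/
noncomputable def gseq (ω : ℤ_[2]) (k : ℕ) : ℕ :=
  binom2 (ω + (k : ℤ_[2])) (2 * k)

/-- `h_ω(k) = (ω+k choose 2k+1)₂`. -/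
noncomputable def hseq (ω : ℤ_[2]) (k : ℕ) : ℕ :=
  binom2 (ω + (k : ℤ_[2])) (2 * k + 1)

/-- The canonical approximation `ω.appr n` is the only residue below `2 ^ n` congruent to `ω`. -/
lemma appr_eq_of_dvd {ω : ℤ_[2]} {n a : ℕ} (ha : a < 2 ^ n)
    (h : (2 : ℤ_[2]) ^ n ∣ ω - a) : ω.appr n = a := by
  have h1 := PadicInt.appr_spec n ω
  have h2 : ω - (a : ℤ_[2]) ∈ Ideal.span {((2 : ℕ) : ℤ_[2]) ^ n} :=
    Ideal.mem_span_singleton.2 (by exact_mod_cast h)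
  have h3 := PadicInt.zmod_congr_of_sub_mem_span n ω _ _ h1 h2
  rw [ZMod.natCast_eq_natCast_iff'] at h3
  rwa [Nat.mod_eq_of_lt (PadicInt.appr_lt ω n), Nat.mod_eq_of_lt ha] at h3

lemma appr_two_mul_add (ω : ℤ_[2]) (b n : ℕ) (hb : b < 2) :
    (2 * ω + b).appr (n + 1) = 2 * ω.appr n + b := by
  apply appr_eq_of_dvd
  · have := PadicInt.appr_lt ω n
    rw [pow_succ]
    omega
  · obtain ⟨c, hc⟩ := Ideal.mem_span_singleton.1 (PadicInt.appr_spec n ω)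
    refine ⟨c, ?_⟩
    push_cast at hc ⊢
    linear_combination 2 * hc

lemma padicDigit_two_mul_add_zero (ω : ℤ_[2]) (b : ℕ) (hb : b < 2) :
    padicDigit (2 * ω + b) 0 = b := by
  rw [padicDigit, appr_two_mul_add ω b 0 hb, Nat.testBit_zero]
  interval_cases b <;> simp

lemma padicDigit_two_mul_add_succ (ω : ℤ_[2]) (b j : ℕ) (hb : b < 2) :
    padicDigit (2 * ω + b) (j + 1) = padicDigit ω j := by
  rw [padicDigit, padicDigit, appr_two_mul_add ω b (j + 1) hb, Nat.testBit_succ,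
    show (2 * ω.appr (j + 1) + b) / 2 = ω.appr (j + 1) by omega]

/-- The product defining `binom2 ω k` may be truncated at any `N` beyond the last binary digit
of `k`. -/
lemma binom2_eq_prod_range (ω : ℤ_[2]) {k N : ℕ} (hN : k < 2 ^ N) :
    binom2 ω k =
      ∏ i ∈ Finset.range N, Nat.choose (padicDigit ω i) (if k.testBit i then 1 else 0) := by
  have key : ∀ {M M' : ℕ}, M ≤ M' → k < 2 ^ M →
      ∏ i ∈ Finset.range M, Nat.choose (padicDigit ω i) (if k.testBit i then 1 else 0) =
      ∏ i ∈ Finset.range M', Nat.choose (padicDigit ω i) (if k.testBit i then 1 else 0) := by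
    intro M M' hM hk
    refine Finset.prod_subset (Finset.range_mono hM) fun i _ hi => ?_
    have hMi : M ≤ i := by simpa using hi
    have hbit : k.testBit i = false :=
      Nat.testBit_lt_two_pow (hk.trans_le (Nat.pow_le_pow_right (by norm_num) hMi))
    simp [hbit]
  rw [binom2]
  rcases le_total (k + 1) N with h | h
  · exact key h ((Nat.lt_succ_self k).trans Nat.lt_two_pow_self)
  · exact (key h hN).symm

/-- Splitting off the lowest binary digits: `(2ω + b choose 2k + c)₂ = C(b, c) · (ω choose k)₂`
for `b, c ∈ {0, 1}`. -/
lemma binom2_two_mul_add (ω : ℤ_[2]) (k b c : ℕ) (hb : b < 2) (hc : c < 2) :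
    binom2 (2 * ω + b) (2 * k + c) = b.choose c * binom2 ω k := by
  have hk : k < 2 ^ (2 * k + c) :=
    (show k ≤ 2 * k + c by omega).trans_lt Nat.lt_two_pow_self
  rw [binom2_eq_prod_range ω hk, binom2, Finset.prod_range_succ', mul_comm,
    padicDigit_two_mul_add_zero ω b hb]
  congr 1
  · rw [Nat.testBit_zero]
    interval_cases c <;> simp
  · refine Finset.prod_congr rfl fun i _ => ?_
    rw [padicDigit_two_mul_add_succ ω b i hb, Nat.testBit_succ,
      show (2 * k + c) / 2 = k by omega]

/-- The recursion `binom2_two_mul_add` for arguments presented in any equivalent form. -/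
lemma binom2_of_eq {x : ℤ_[2]} {m : ℕ} (ω : ℤ_[2]) (k b c : ℕ) (hb : b < 2) (hc : c < 2)
    (hx : x = 2 * ω + b) (hm : m = 2 * k + c) : binom2 x m = b.choose c * binom2 ω k := by
  rw [hx, hm, binom2_two_mul_add ω k b c hb hc]

/-- The kernel relations for the sequences `f`, `g`, `h`. -/
theorem kernel_relations (ω : ℤ_[2]) (k : ℕ) :
    fseq (2 * ω) (2 * k) = gseq ω k ∧
    fseq (2 * ω + 1) (2 * k) = 0 ∧
    fseq (2 * ω) (2 * k + 1) = 0 ∧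
    fseq (2 * ω + 1) (2 * k + 1) = fseq ω k ∧
    gseq (2 * ω) (2 * k) = gseq ω k ∧
    gseq (2 * ω + 1) (2 * k) = gseq ω k ∧
    gseq (2 * ω) (2 * k + 1) = hseq ω k ∧
    gseq (2 * ω + 1) (2 * k + 1) = fseq ω k ∧
    hseq (2 * ω) (2 * k) = 0 ∧
    hseq (2 * ω + 1) (2 * k) = gseq ω k ∧
    hseq (2 * ω) (2 * k + 1) = hseq ω k ∧
    hseq (2 * ω + 1) (2 * k + 1) = 0 := by
  unfold fseq gseq hseq
  refine ⟨?_, ?_, ?_, ?_, ?_, ?_, ?_, ?_, ?_, ?_, ?_, ?_⟩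
  · simpa using binom2_of_eq (ω + k) (2 * k) 1 1 (by norm_num) (by norm_num)
      (by push_cast; ring) (by ring)
  · simpa using binom2_of_eq (ω + k + 1) (2 * k) 0 1 (by norm_num) (by norm_num)
      (by push_cast; ring) (by ring)
  · simpa using binom2_of_eq (ω + k + 1) (2 * k + 1) 0 1 (by norm_num) (by norm_num)
      (by push_cast; ring) (by ring)
  · simpa using binom2_of_eq (ω + k + 1) (2 * k + 1) 1 1 (by norm_num) (by norm_num)
      (by push_cast; ring) (by ring)
  · simpa using binom2_of_eq (ω + k) (2 * k) 0 0 (by norm_num) (by norm_num)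
      (by push_cast; ring) (by ring)
  · simpa using binom2_of_eq (ω + k) (2 * k) 1 0 (by norm_num) (by norm_num)
      (by push_cast; ring) (by ring)
  · simpa using binom2_of_eq (ω + k) (2 * k + 1) 1 0 (by norm_num) (by norm_num)
      (by push_cast; ring) (by ring)
  · simpa using binom2_of_eq (ω + k + 1) (2 * k + 1) 0 0 (by norm_num) (by norm_num)
      (by push_cast; ring) (by ring)
  · simpa using binom2_of_eq (ω + k) (2 * k) 0 1 (by norm_num) (by norm_num)
      (by push_cast; ring) (by ring)
  · simpa using binom2_of_eq (ω + k) (2 * k) 1 1 (by norm_num) (by norm_num)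
      (by push_cast; ring) (by ring)
  · simpa using binom2_of_eq (ω + k) (2 * k + 1) 1 1 (by norm_num) (by norm_num)
      (by push_cast; ring) (by ring)
  · simpa using binom2_of_eq (ω + k + 1) (2 * k + 1) 0 1 (by norm_num) (by norm_num)
      (by push_cast; ring) (by ring)
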